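/- arXiv:1307.1784 — 11 statements merged into one kernel-verified Lean document; each statement's English description precedes it below -/
import Mathlib

section
/- Let m be a positive integer and let K be a field of characteristic zero that is finitely generated as a field extension of ℚ (i.e., K is generated over ℚ by a finite set of elements). Then there exists a constant B (depending on K and m) such that every finite subgroup G of GL_m(K) has order |G| ≤ B. -/
/-- Finite groups acting faithfully on `K^n` have bounded order, for each `n`. -/
def BFin (K : Type) [CommRing K] : Prop :=
  ∀ n : ℕ, ∃ B : ℕ, ∀ (G : Type) [Group G] [Finite G]
    (ρ : G →* Matrix (Fin n) (Fin n) K), Function.Injective ρ → Nat.card G ≤ B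

lemma BFin.of_injective {K L : Type} [CommRing K] [CommRing L] (f : K →+* L)
    (hf : Function.Injective f) (h : BFin L) : BFin K := by
  intro n
  obtain ⟨B, hB⟩ := h n
  refine ⟨B, fun G _ _ ρ hρ => hB G (f.mapMatrix.toMonoidHom.comp ρ) ?_⟩
  exact (Matrix.map_injective hf).comp hρ

lemma BFin.of_finite (K : Type) [CommRing K] [Finite K] : BFin K := by
  intro n
  exact ⟨Nat.card (Matrix (Fin n) (Fin n) K), fun G _ _ ρ hρ =>
    Nat.card_le_card_of_injective ρ hρ⟩

lemma eq_one_of_map_eq_one {R k : Type} [CommRing R] [IsDomain R] [Field k] (φ : R →+* k)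
    {n l : ℕ} (hl : (l : k) ≠ 0) (A : Matrix (Fin n) (Fin n) R) (hA : A ^ l = 1)
    (hφ : φ.mapMatrix A = 1) : A = 1 := by
  have h1 : (A - 1) * ∑ i ∈ Finset.range l, A ^ i = 0 := by
    rw [mul_geom_sum, hA, sub_self]
  have h2 : (∑ i ∈ Finset.range l, A ^ i).det ≠ 0 := by
    intro h0
    have h3 := congrArg φ h0
    rw [RingHom.map_det, map_sum, map_zero] at h3
    simp only [map_pow, hφ, one_pow, Finset.sum_const, Finset.card_range] at h3
    rw [Matrix.det_smul_of_tower, Matrix.det_one] at h3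
    simp at h3
    exact hl h3.1
  have h4 := congrArg (· * (∑ i ∈ Finset.range l, A ^ i).adjugate) h1
  simp only [mul_assoc, Matrix.mul_adjugate, zero_mul, Matrix.mul_smul, mul_one] at h4
  exact sub_eq_zero.mp ((smul_eq_zero.mp h4).resolve_left h2)

lemma injective_of_prime {G H : Type} [Group G] [Finite G] [Monoid H] (f : G →* H)
    (h : ∀ (l : ℕ) (g : G), l.Prime → g ^ l = 1 → f g = 1 → g = 1) :
    Function.Injective f := by
  rw [injective_iff_map_eq_one]
  by_contra! hc
  obtain ⟨g, hg, hne⟩ := hc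
  have ho : orderOf g ≠ 1 := by simpa using hne
  obtain ⟨p, hp, hd⟩ := Nat.exists_prime_and_dvd ho
  obtain ⟨c, hc⟩ := hd
  have hgc : g ^ c = 1 := by
    refine h p (g ^ c) hp ?_ (by simp [hg])
    rw [← pow_mul, mul_comm, ← hc, pow_orderOf_eq_one]
  have h0 : 0 < orderOf g := orderOf_pos g
  have h2 := hp.two_le
  have hc0 : 0 < c := by
    rcases Nat.eq_zero_or_pos c with h | h
    · rw [h, mul_zero] at hc
      omega
    · exact h
  have h3 := Nat.le_of_dvd hc0 (orderOf_dvd_of_pow_eq_one hgc)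
  nlinarith

lemma BFin.int : BFin ℤ := by
  intro n
  obtain ⟨B, hB⟩ := BFin.of_finite (ZMod 6) n
  refine ⟨B, fun G _ _ ρ hρ =>
    hB G ((Int.castRingHom (ZMod 6)).mapMatrix.toMonoidHom.comp ρ) ?_⟩
  apply injective_of_prime
  intro l g hl hg h
  apply hρ
  rw [map_one]
  have hA : ρ g ^ l = 1 := by rw [← map_pow, hg, map_one]
  have key : ∀ p : ℕ, p ∣ 6 → (Int.castRingHom (ZMod p)).mapMatrix (ρ g) = 1 := by
    intro p hp
    have h' : (Int.castRingHom (ZMod 6)).mapMatrix (ρ g) = 1 := h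
    have h2 := congrArg (ZMod.castHom hp (ZMod p)).mapMatrix h'
    rw [map_one, ← RingHom.comp_apply, RingHom.mapMatrix_comp] at h2
    rw [← h2]
    congr 1
    exact congrArg _ (RingHom.ext_int _ _)
  have : Fact (Nat.Prime 2) := ⟨Nat.prime_two⟩
  have : Fact (Nat.Prime 3) := ⟨Nat.prime_three⟩
  by_cases h2 : l = 2
  · subst h2
    have h23 : ((2 : ℕ) : ZMod 3) ≠ 0 := by
      rw [Ne, ZMod.natCast_eq_zero_iff]; norm_num
    exact eq_one_of_map_eq_one (Int.castRingHom (ZMod 3)) h23 _ hA (key 3 (by norm_num))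
  · refine eq_one_of_map_eq_one (Int.castRingHom (ZMod 2)) ?_ _ hA (key 2 (by norm_num))
    rw [Ne, ZMod.natCast_eq_zero_iff, Nat.prime_dvd_prime_iff_eq Nat.prime_two hl]
    exact fun h => h2 h.symm

lemma BFin.polynomial {K : Type} [Field K] [CharZero K] (h : BFin K) :
    BFin (Polynomial K) := by
  intro n
  obtain ⟨B, hB⟩ := h n
  refine ⟨B, fun G _ _ ρ hρ =>
    hB G ((Polynomial.evalRingHom (0 : K)).mapMatrix.toMonoidHom.comp ρ) ?_⟩
  apply injective_of_prime
  intro l g hl hg h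
  apply hρ
  rw [map_one]
  have hA : ρ g ^ l = 1 := by rw [← map_pow, hg, map_one]
  exact eq_one_of_map_eq_one (Polynomial.evalRingHom (0 : K))
    (by exact_mod_cast hl.ne_zero) _ hA h

lemma exists_integral_rep (R F : Type) [CommRing R] [IsDomain R] [IsPrincipalIdealRing R]
    [Field F] [Algebra R F] [IsFractionRing R F] (n : ℕ) (G : Type) [Group G] [Finite G]
    (ρ : G →* Matrix (Fin n) (Fin n) F) (hρ : Function.Injective ρ) :
    ∃ r ≤ n, ∃ ρ' : G →* Matrix (Fin r) (Fin r) R, Function.Injective ρ' := by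
  classical
  let v : G × Fin n → (Fin n → F) := fun p => (ρ p.1).mulVec (Pi.single p.2 1)
  let Λ : Submodule R (Fin n → F) := Submodule.span R (Set.range v)
  let T : G →* Module.End R (Fin n → F) :=
    { toFun := fun g => (Matrix.toLin' (ρ g)).restrictScalars R
      map_one' := by ext; simp
      map_mul' := by intro a b; ext; simp }
  have hT : ∀ g x, T g x = (ρ g).mulVec x := fun g x => rfl
  have hstab : ∀ g, ∀ x ∈ Λ, T g x ∈ Λ := by
    intro g
    change Λ ≤ Λ.comap (T g)
    refine Submodule.span_le.mpr ?_
    rintro _ ⟨⟨a, i⟩, rfl⟩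
    refine Submodule.subset_span ⟨(g * a, i), ?_⟩
    simp only [v, hT, map_mul, Matrix.mulVec_mulVec]
  let S : G →* Module.End R Λ :=
    { toFun := fun g => (T g).restrict (hstab g)
      map_one' := by ext; simp
      map_mul' := by intro a b; ext; simp }
  have hS : Function.Injective S := by
    intro a b hab
    apply hρ
    apply Matrix.toLin'.injective
    refine (Pi.basisFun F (Fin n)).ext fun i => ?_
    have hi : (Pi.single i 1 : Fin n → F) ∈ Λ := Submodule.subset_span ⟨(1, i), by
      simp only [v, map_one, Matrix.one_mulVec]⟩
    have := congrArg Subtype.val (LinearMap.congr_fun hab ⟨_, hi⟩)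
    rw [Pi.basisFun_apply]
    exact this
  have : Module.Finite R Λ := Module.Finite.span_of_finite R (Set.finite_range v)
  have : FaithfulSMul R F := (faithfulSMul_iff_algebraMap_injective R F).mpr
    (IsFractionRing.injective R F)
  have : Module.IsTorsionFree R F := inferInstance
  have : Module.IsTorsionFree R Λ := inferInstance
  have : Module.Free R Λ := inferInstance
  let b := Module.finBasis R Λ
  refine ⟨Module.finrank R Λ, ?_, ((LinearMap.toMatrixAlgEquiv b : _ ≃ₐ[R] _) : _ →* _).comp S, ?_⟩
  · have h1 : LinearIndependent R (fun i => (b i : Fin n → F)) :=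
      b.linearIndependent.map' Λ.subtype (by simp)
    have h2 := (LinearIndependent.iff_fractionRing R F).mp h1
    simpa using h2.fintype_card_le_finrank
  · exact (LinearMap.toMatrixAlgEquiv b).injective.comp hS

lemma BFin.fractionRing (R F : Type) [CommRing R] [IsDomain R] [IsPrincipalIdealRing R]
    [Field F] [Algebra R F] [IsFractionRing R F] (h : BFin R) : BFin F := by
  intro n
  choose B hB using h
  refine ⟨∑ i ∈ Finset.range (n + 1), B i, fun G _ _ ρ hρ => ?_⟩
  obtain ⟨r, hr, ρ', hρ'⟩ := exists_integral_rep R F n G ρ hρ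
  exact (hB r G ρ' hρ').trans
    (Finset.single_le_sum (f := B) (fun _ _ => Nat.zero_le _) (by simp; omega))

lemma BFin.finiteDimensional (E L : Type) [Field E] [Field L] [Algebra E L]
    [FiniteDimensional E L] (h : BFin E) : BFin L := by
  intro n
  let b := Module.finBasis E L
  let d := Module.finrank E L
  obtain ⟨B, hB⟩ := h (n * d)
  refine ⟨B, fun G _ _ ρ hρ => ?_⟩
  let f1 : Matrix (Fin n) (Fin n) L →+* Matrix (Fin n) (Fin n) (Matrix (Fin d) (Fin d) E) :=
    (Algebra.leftMulMatrix b : L →ₐ[E] _).toRingHom.mapMatrix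
  have hf1 : Function.Injective f1 := Matrix.map_injective (Algebra.leftMulMatrix_injective b)
  let f2 := Matrix.compRingEquiv (Fin n) (Fin d) E
  let f3 := Matrix.reindexAlgEquiv E E (finProdFinEquiv (m := n) (n := d))
  refine hB G (f3.toRingEquiv.toRingHom.toMonoidHom.comp (f2.toRingHom.toMonoidHom.comp (f1.toMonoidHom.comp ρ))) ?_
  exact f3.injective.comp (f2.injective.comp (hf1.comp hρ))

lemma BFin.simple (E L : Type) [Field E] [CharZero E] [Field L] [Algebra E L] (x : L)
    (h : BFin E) : BFin (IntermediateField.adjoin E {x}) := by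
  by_cases hx : IsAlgebraic E x
  · have := IntermediateField.adjoin.finiteDimensional hx.isIntegral
    exact BFin.finiteDimensional E _ h
  · have h1 : BFin (RatFunc E) := BFin.fractionRing (Polynomial E) (RatFunc E) h.polynomial
    let e := RatFunc.algEquivOfTranscendental x hx
    exact BFin.of_injective (e.symm : _ →+* _) e.symm.injective h1

/-- Minkowski-type theorem: if `K` is a field of characteristic zero that is finitely
generated over `ℚ`, then finite subgroups of `GL_m(K)` have bounded order. -/
theorem bounded_finite_subgroups_GL_of_finitelyGenerated_over_rat
    (m : ℕ) (hm : 0 < m) (K : Type) [Field K] [CharZero K]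
    (hK : ∃ S : Finset K, IntermediateField.adjoin ℚ (S : Set K) = ⊤) :
    ∃ B : ℕ, ∀ G : Subgroup (Matrix.GeneralLinearGroup (Fin m) K),
      Finite G → Nat.card G ≤ B := by
  have hQ : BFin ℚ := BFin.fractionRing ℤ ℚ BFin.int
  have hfg : (⊤ : IntermediateField ℚ K).FG := hK
  have htop : BFin (⊤ : IntermediateField ℚ K) := by
    refine IntermediateField.induction_on_adjoin_fg (F := ℚ) (E := K)
      (P := fun E => BFin E) ?_ ?_ _ hfg
    · let e := IntermediateField.botEquiv ℚ K
      exact BFin.of_injective (e : _ →+* _) e.injective hQ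
    · intro E x hE
      exact BFin.simple E K x hE
  have hBK : BFin K := by
    let e := IntermediateField.topEquiv (F := ℚ) (E := K)
    exact BFin.of_injective (e.symm : _ →+* _) e.symm.injective htop
  obtain ⟨B, hB⟩ := hBK m
  refine ⟨B, fun G hG => hB G ((Units.coeHom _).comp G.subtype) ?_⟩
  exact Units.val_injective.comp G.subtype_injective
end

section
/- For every positive integer m there exists a constant B = B(m) such that every finite subgroup G of GL_m(ℤ) has order |G| ≤ B. -/
/-- First-order binomial expansion in a noncommutative ring. -/
lemma one_add_pow_expand {R : Type*} [Ring R] (x : R) (n : ℕ) :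
    ∃ y : R, (1 + x) ^ n = 1 + (n : ℤ) • x + x * x * y := by
  induction n with
  | zero => exact ⟨0, by simp⟩
  | succ n ih =>
    obtain ⟨y, hy⟩ := ih
    refine ⟨(n : ℤ) • 1 + y + y * x, ?_⟩
    rw [pow_succ, hy]
    simp only [mul_add, add_mul, mul_one, one_mul, smul_mul_assoc, mul_smul_comm, Nat.cast_add,
      Nat.cast_one, add_smul, one_smul, mul_assoc]
    abel

/-- One descent step. -/
lemma descent_step {m : ℕ} (q : ℕ) (hq : q.Prime) (k : ℕ)
    (B : Matrix (Fin m) (Fin m) ℤ)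
    (h : (1 + (3 ^ (k + 1) : ℤ) • B) ^ q = 1) (i j : Fin m) : (3 : ℤ) ∣ B i j := by
  have h3k : (3 ^ (k + 1) : ℤ) ≠ 0 := by positivity
  by_cases h3 : q = 3
  · subst h3
    have e : (3 ^ (k + 2) : ℤ) • (B + (3 : ℤ) • ((3 ^ k : ℤ) • (B * B))
        + (3 ^ (2 * k + 1) : ℤ) • (B * B * B)) = 0 := by
      have hx : ∀ x : Matrix (Fin m) (Fin m) ℤ,
          (1 + x) ^ 3 = 1 + ((3 : ℤ) • x + (3 : ℤ) • (x * x) + x * x * x) := by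
        intro x; noncomm_ring
      rw [hx, add_eq_left] at h
      rw [← h]
      simp only [smul_add, smul_mul_assoc, mul_smul_comm, smul_smul]
      congr 1
      · congr 1
        · congr 1; ring
        · congr 1; ring
      · congr 1; ring
    have e2 := (smul_eq_zero.1 e).resolve_left (by positivity)
    have e3 := congrFun (congrFun e2 i) j
    simp only [Matrix.add_apply, Matrix.smul_apply, Matrix.zero_apply, smul_eq_mul] at e3
    refine ⟨-(3 ^ k * (B * B) i j + 3 ^ (2 * k) * (B * B * B) i j), ?_⟩
    rw [pow_succ] at e3
    linarith
  · obtain ⟨y, hy⟩ := one_add_pow_expand ((3 ^ (k + 1) : ℤ) • B) q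
    rw [hy] at h
    have e : (3 ^ (k + 1) : ℤ) • ((q : ℤ) • B + (3 ^ (k + 1) : ℤ) • (B * B * y)) = 0 := by
      rw [add_assoc, add_eq_left] at h
      rw [← h]
      simp only [smul_add, smul_mul_assoc, mul_smul_comm]
      rw [smul_comm (q : ℤ)]
    have e2 := (smul_eq_zero.1 e).resolve_left h3k
    have e3 := congrFun (congrFun e2 i) j
    simp only [Matrix.add_apply, Matrix.smul_apply, Matrix.zero_apply, smul_eq_mul] at e3
    have hd : (3 : ℤ) ∣ q * B i j :=
      ⟨-(3 ^ k * (B * B * y) i j), by rw [pow_succ] at e3; linarith⟩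
    rcases Int.prime_three.dvd_or_dvd hd with h' | h'
    · exact absurd ((Nat.prime_dvd_prime_iff_eq Nat.prime_three hq).1 (by exact_mod_cast h')).symm h3
    · exact h'

lemma descent_prime {m : ℕ} (q : ℕ) (hq : q.Prime) (A C : Matrix (Fin m) (Fin m) ℤ)
    (hC : A = 1 + (3 : ℤ) • C) (h : A ^ q = 1) : A = 1 := by
  have key : ∀ k : ℕ, ∃ B : Matrix (Fin m) (Fin m) ℤ, A = 1 + (3 ^ (k + 1) : ℤ) • B := by
    intro k
    induction k with
    | zero => exact ⟨C, by simpa using hC⟩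
    | succ k ih =>
      obtain ⟨B, hB⟩ := ih
      have hd := descent_step q hq k B (hB ▸ h)
      choose D hD using hd
      refine ⟨Matrix.of D, ?_⟩
      rw [hB]
      congr 1
      ext i j
      simp only [Matrix.smul_apply, Matrix.of_apply, smul_eq_mul]
      rw [hD, pow_succ _ (k + 1)]
      ring
  rw [← sub_eq_zero]
  ext i j
  obtain ⟨B, hB⟩ := key ((A - 1) i j).natAbs
  have e : (A - 1) i j = 3 ^ (((A - 1) i j).natAbs + 1) * B i j := by
    have : A - 1 = (3 ^ (((A - 1) i j).natAbs + 1) : ℤ) • B := sub_eq_iff_eq_add'.2 hB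
    conv_lhs => rw [this]
    simp
  refine Int.eq_zero_of_abs_lt_dvd (Dvd.intro _ e.symm) ?_
  have := Nat.lt_pow_self (n := ((A - 1) i j).natAbs + 1) (a := 3) (by norm_num)
  rw [Int.abs_eq_natAbs]
  have h2 : ((A - 1) i j).natAbs < 3 ^ (((A - 1) i j).natAbs + 1) := by omega
  exact_mod_cast h2

lemma descent_all {m : ℕ} (n : ℕ) (A C : Matrix (Fin m) (Fin m) ℤ)
    (hn : n ≠ 0) (hC : A = 1 + (3 : ℤ) • C) (h : A ^ n = 1) : A = 1 := by
  induction n using Nat.recOnMul generalizing A C with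
  | zero => exact absurd rfl hn
  | one => simpa using h
  | prime p hp => exact descent_prime p hp A C hC h
  | mul a b iha ihb =>
    have ha : a ≠ 0 := left_ne_zero_of_mul hn
    have hb : b ≠ 0 := right_ne_zero_of_mul hn
    rw [pow_mul] at h
    obtain ⟨y, hy⟩ := one_add_pow_expand ((3 : ℤ) • C) a
    rw [← hC] at hy
    refine iha A C ha hC (ihb (A ^ a) ((a : ℤ) • C + (3 : ℤ) • (C * C * y)) hb ?_ h)
    rw [hy]
    simp only [smul_add, smul_mul_assoc, mul_smul_comm, add_assoc]
    rw [smul_comm (a : ℤ)]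

/-- Finite subgroups of `GL_m(ℤ)` have uniformly bounded order. -/
theorem bounded_finite_subgroups_GL_int (m : ℕ) (hm : 0 < m) :
    ∃ B : ℕ, ∀ G : Subgroup (Matrix.GeneralLinearGroup (Fin m) ℤ),
      Finite G → Nat.card G ≤ B := by
  refine ⟨Nat.card (Matrix.GeneralLinearGroup (Fin m) (ZMod 3)), fun G hG => ?_⟩
  let f : G →* Matrix.GeneralLinearGroup (Fin m) (ZMod 3) :=
    (Matrix.GeneralLinearGroup.map (Int.castRingHom (ZMod 3))).comp G.subtype
  refine Nat.card_le_card_of_injective f ((injective_iff_map_eq_one f).2 fun g hg => ?_)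
  obtain ⟨n, hn, hgn⟩ := (isOfFinOrder_of_finite g).exists_pow_eq_one
  have hd : ∀ i j, (3 : ℤ) ∣ ((g : Matrix.GeneralLinearGroup (Fin m) ℤ).1 - 1) i j := by
    intro i j
    have h0 : (f g).1 = 1 := by rw [hg]; rfl
    have h1 := congrFun (congrFun h0 i) j
    have h2 : (((g : Matrix.GeneralLinearGroup (Fin m) ℤ).1 i j : ℤ) : ZMod 3)
      = (1 : Matrix (Fin m) (Fin m) (ZMod 3)) i j := h1
    refine (ZMod.intCast_zmod_eq_zero_iff_dvd _ 3).1 ?_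
    rw [Matrix.sub_apply, Int.cast_sub, h2, Matrix.one_apply, Matrix.one_apply]
    split_ifs <;> simp
  choose D hD using hd
  apply Subtype.ext
  apply Units.ext
  refine descent_all n _ (Matrix.of D) hn.ne' ?_ ?_
  · rw [← sub_eq_iff_eq_add']
    ext i j
    rw [hD]; simp
  · have := congrArg (fun x : G => (x : Matrix.GeneralLinearGroup (Fin m) ℤ).1) hgn
    simpa using this
end

section
/- Let k be a field of characteristic zero that is finitely generated as a field extension of ℚ, and let N be a positive integer. Then there exists a constant B = B(k, N) such that for every field extension K of k which is finitely generated as a field over k and in which k is algebraically closed (i.e., every element of K that is algebraic over k lies in the image of k), every finite subgroup G of GL_N(K) has order |G| ≤ B. -/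
open Polynomial

theorem aux_lift {F E L : Type*} [Field F] [Field E] [Field L] [Algebra F E] [Algebra E L]
    [Algebra F L] [IsScalarTower F E L]
    (h : ∀ a : E, IsAlgebraic F a → ∃ b : F, algebraMap F E b = a)
    (z : L) (hz : IsIntegral F z) :
    (minpoly F z).natDegree ≤ (minpoly E z).natDegree := by
  have hzE : IsIntegral E z := hz.tower_top
  have hd : minpoly E z ∣ (minpoly F z).map (algebraMap F E) :=
    minpoly.dvd_map_of_isScalarTower F E z
  have hl : minpoly E z ∈ Polynomial.lifts (algebraMap F E) := by
    rw [Polynomial.lifts_iff_coeff_lifts]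
    intro n
    exact h _ (Polynomial.isIntegral_coeff_of_dvd _ _ (minpoly.monic hz) (minpoly.monic hzE)
      hd n).isAlgebraic
  obtain ⟨q, hq, hdeg, hmon⟩ := Polynomial.lifts_and_natDegree_eq_and_monic hl (minpoly.monic hzE)
  rw [← hdeg]
  apply Polynomial.natDegree_le_natDegree
  apply minpoly.min _ _ hmon
  rw [← Polynomial.aeval_map_algebraMap E, hq, minpoly.aeval]

theorem aux_mv {Q σ : Type*} [Field Q] (a : FractionRing (MvPolynomial σ Q)) (ha : IsAlgebraic Q a) :
    ∃ b : Q, algebraMap Q _ b = a := by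
  have h1 : IsIntegral (MvPolynomial σ Q) a := ha.isIntegral.tower_top
  obtain ⟨p, rfl⟩ := IsIntegrallyClosed.isIntegral_iff.mp h1
  have hp : IsAlgebraic Q p :=
    (isAlgebraic_algebraMap_iff (IsFractionRing.injective (MvPolynomial σ Q) _)).mp ha
  by_cases h0 : p = 0
  · exact ⟨0, by simp [h0]⟩
  have hu : IsUnit p := by
    obtain ⟨q, r, hr, hqr⟩ : ∃ q : MvPolynomial σ Q, ∃ r : Q, r ≠ 0 ∧ p * q = algebraMap Q _ r := by
      obtain ⟨q, hq, r, hr, h⟩ := hp.exists_nonzero_eq_adjoin_mul (mem_nonZeroDivisors_of_ne_zero h0)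
      exact ⟨q, r, hr, h⟩
    have : IsUnit (p * q) := by
      rw [hqr]; exact (isUnit_iff_ne_zero.mpr hr).map _
    exact isUnit_of_mul_isUnit_left this
  obtain ⟨r, hr, h⟩ := MvPolynomial.isUnit_iff_eq_C_of_isReduced.mp hu
  refine ⟨r, ?_⟩
  rw [h]
  exact IsScalarTower.algebraMap_apply Q (MvPolynomial σ Q) _ r

theorem aux_adj {Q k σ : Type*} [Field Q] [Field k] [Algebra Q k] {x : σ → k}
    (hx : AlgebraicIndependent Q x) (a : IntermediateField.adjoin Q (Set.range x))
    (ha : IsAlgebraic Q a) : ∃ b : Q, algebraMap Q _ b = a := by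
  let e := hx.aevalEquivField
  obtain ⟨b, hb⟩ := aux_mv (e.symm a) (ha.algHom e.symm.toAlgHom)
  refine ⟨b, ?_⟩
  apply e.symm.injective
  rw [← hb]
  exact e.symm.commutes b

theorem aux_deg (k : Type) [Field k] [CharZero k]
    (hk : ∃ S : Finset k, IntermediateField.adjoin ℚ (S : Set k) = ⊤) :
    ∃ D : ℕ, ∀ (L : Type) [Field L] [CharZero L] [Algebra k L] (z : L), IsIntegral ℚ z →
      (minpoly ℚ z).natDegree ≤ D * (minpoly k z).natDegree := by
  have hE : Algebra.EssFiniteType ℚ k := IntermediateField.fg_top_iff.mp hk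
  obtain ⟨s, hs⟩ := exists_isTranscendenceBasis ℚ k
  let F := IntermediateField.adjoin ℚ (Set.range ((↑) : s → k))
  have hF : Algebra.IsAlgebraic F k := hs.isAlgebraic_field
  have hEF : Algebra.EssFiniteType F k := Algebra.EssFiniteType.of_comp ℚ F k
  have hfin : FiniteDimensional F k := Algebra.finite_of_essFiniteType_of_isAlgebraic
  refine ⟨Module.finrank F k, fun L _ _ _ z hz => ?_⟩
  have h1 : (minpoly ℚ z).natDegree ≤ (minpoly F z).natDegree := by
    apply aux_lift _ z hz
    intro a ha
    exact aux_adj hs.1 a ha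
  refine h1.trans ?_
  have hzk : IsIntegral k z := hz.tower_top
  have := IntermediateField.adjoin.finiteDimensional hzk
  rw [← IntermediateField.adjoin.finrank hzk, Module.finrank_mul_finrank F k]
  have : FiniteDimensional F (IntermediateField.adjoin k {z}) := FiniteDimensional.trans F k _
  have h2 := minpoly.natDegree_le (A := F) (IntermediateField.AdjoinSimple.gen k z)
  rwa [← minpoly.algebraMap_eq (algebraMap (IntermediateField.adjoin k {z}) L).injective,
    IntermediateField.AdjoinSimple.algebraMap_gen] at h2

theorem aux_totient (n D : ℕ) (hn : n ≠ 0) (h : n.totient ≤ D) : n ∣ (2 * D).factorial := by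
  rw [Nat.dvd_iff_prime_pow_dvd_dvd]
  intro p j hp hj
  have hD : 0 < D := (Nat.totient_pos.mpr (Nat.pos_of_ne_zero hn)).trans_le h
  rcases Nat.eq_zero_or_pos j with rfl | hj0
  · simp
  apply Nat.dvd_factorial (pow_pos hp.pos _)
  have h1 := Nat.le_of_dvd (Nat.totient_pos.mpr (Nat.pos_of_ne_zero hn)) (Nat.totient_dvd_of_dvd hj)
  rw [Nat.totient_prime_pow hp hj0] at h1
  obtain ⟨i, rfl⟩ : ∃ i, j = i + 1 := ⟨j - 1, by omega⟩
  have h2 : p ≤ 2 * (p - 1) := by have := hp.two_le; omega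
  calc p ^ (i+1) = p ^ i * p := pow_succ _ _
    _ ≤ p ^ i * (2 * (p - 1)) := Nat.mul_le_mul_left _ h2
    _ = 2 * (p ^ i * (p - 1)) := by ring
    _ ≤ 2 * D := by simp at h1; omega

theorem aux_root {L : Type*} [Field L] [CharZero L] (z : L) (m : ℕ) (hm : 0 < m) (hz : z ^ m = 1)
    (D : ℕ) (h : (minpoly ℚ z).natDegree ≤ D) : z ^ (2 * D).factorial = 1 := by
  have hp := IsPrimitiveRoot.orderOf z
  have ho : 0 < orderOf z := (isOfFinOrder_iff_pow_eq_one.mpr ⟨m, hm, hz⟩).orderOf_pos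
  rw [← Polynomial.cyclotomic_eq_minpoly_rat hp ho, Polynomial.natDegree_cyclotomic] at h
  exact orderOf_dvd_iff_pow_eq_one.mp (aux_totient _ _ ho.ne' h)

theorem aux_proj {K : Type*} [Field K] [CharZero K] {N : ℕ} (u : Matrix (Fin N) (Fin N) K)
    (m : ℕ) (hm : 0 < m) (hu : u ^ m = 1) (ht : ∀ n, (u ^ n).trace = N) : u = 1 := by
  set S := ∑ i ∈ Finset.range m, u ^ i with hS
  have hSu : S * u = S := by
    have := geom_sum_mul u m
    rw [hu, sub_self, mul_sub, mul_one, sub_eq_zero] at this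
    exact this
  have hSn : ∀ n, S * u ^ n = S := by
    intro n
    induction n with
    | zero => simp
    | succ n ih => rw [pow_succ, ← mul_assoc, ih, hSu]
  have hSS : S * S = (m : K) • S := by
    conv_lhs => rw [hS]
    rw [← hS, Finset.mul_sum, Finset.sum_congr rfl (fun n _ => hSn n)]
    simp [Nat.cast_smul_eq_nsmul]
  have hm0 : (m : K) ≠ 0 := by exact_mod_cast hm.ne'
  set P := (m : K)⁻¹ • S with hP
  have hPP : IsIdempotentElem P := by
    unfold IsIdempotentElem
    rw [hP, smul_mul_smul_comm, hSS, smul_smul]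
    congr 1
    field_simp
  have htr : (1 - P).trace = 0 := by
    rw [Matrix.trace_sub, hP, Matrix.trace_smul, hS, Matrix.trace_sum,
      Finset.sum_congr rfl (fun n _ => ht n)]
    simp [hm0]
  have hid : IsIdempotentElem (Matrix.toLin' (1 - P)) := by
    unfold IsIdempotentElem
    rw [Module.End.mul_eq_comp, ← Matrix.toLin'_mul, hPP.one_sub.eq]
  have h0 := (LinearMap.IsIdempotentElem.trace_eq_zero_iff hid).mp
    (by rw [Matrix.trace_toLin'_eq, htr])
  have h1 : 1 - P = 0 := Matrix.toLin'.injective (h0.trans (map_zero _).symm)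
  have hP1 : P = 1 := (sub_eq_zero.mp h1).symm
  have : P * u = P := by rw [hP, smul_mul_assoc, hSu]
  simpa [hP1] using this

theorem aux_multi {L : Type*} [AddCommMonoid L] (s : Multiset L) (N : ℕ) (h : s.card = N) :
    ∃ f : Fin N → L, (∀ i, f i ∈ s) ∧ s.sum = ∑ i, f i := by
  subst h
  induction s using Quot.inductionOn with
  | h l =>
    refine ⟨fun i => l.get i, fun i => ?_, ?_⟩
    · exact Multiset.mem_coe.mpr (List.get_mem l i)
    · rw [← List.sum_ofFn]
      exact congrArg List.sum (List.ofFn_get l).symm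

theorem aux_trace {K : Type} (L : Type) [Field K] [CharZero K] [Field L] [CharZero L] [Algebra K L]
    [IsAlgClosed L] {N : ℕ} (g : Matrix (Fin N) (Fin N) K) (m : ℕ) (hm : 0 < m) (hg : g ^ m = 1)
    (D : ℕ) (hD : ∀ z : L, IsIntegral ℚ z →
      (minpoly ℚ z).natDegree ≤ D * (minpoly K z).natDegree) :
    ∃ f : Fin N → L, (∀ i, f i ^ (2 * (D * N)).factorial = 1) ∧
      algebraMap K L g.trace = ∑ i, f i := by
  set g' := g.map (algebraMap K L) with hg'
  have htr : algebraMap K L g.trace = g'.charpoly.roots.sum := by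
    rw [← Matrix.trace_eq_sum_roots_charpoly]
    simp [hg', Matrix.trace]
  have hcard : g'.charpoly.roots.card = N := by
    rw [← (IsAlgClosed.splits g'.charpoly).natDegree_eq_card_roots, Matrix.charpoly_natDegree_eq_dim]
    simp
  obtain ⟨f, hf, hsum⟩ := aux_multi _ N hcard
  refine ⟨f, fun i => ?_, htr.trans hsum⟩
  have hr : g'.charpoly.IsRoot (f i) := Polynomial.isRoot_of_mem_roots (hf i)
  have hg'm : g' ^ m = 1 := by
    have := congrArg (algebraMap K L).mapMatrix hg
    rw [map_pow, map_one] at this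
    exact this
  have hzm : f i ^ m = 1 := by
    have h1 := spectrum.pow_mem_pow g' m (Matrix.mem_spectrum_of_isRoot_charpoly hr)
    rw [hg'm] at h1
    by_contra hne
    rw [spectrum.mem_iff] at h1
    apply h1
    rw [← map_one (algebraMap L (Matrix (Fin N) (Fin N) L)), ← map_sub]
    exact (isUnit_iff_ne_zero.mpr (sub_ne_zero.mpr hne)).map _
  have hint : IsIntegral ℚ (f i) := IsIntegral.of_pow hm (by rw [hzm]; exact isIntegral_one)
  apply aux_root _ m hm hzm
  refine (hD _ hint).trans (Nat.mul_le_mul_left _ ?_)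
  have hc : (minpoly K (f i)).natDegree ≤ g.charpoly.natDegree := by
    apply Polynomial.natDegree_le_natDegree
    apply minpoly.min _ _ g.charpoly_monic
    rw [Polynomial.aeval_def, ← Polynomial.eval_map, ← Matrix.charpoly_map]
    exact hr
  simpa using hc

theorem aux_card {K L : Type} [Field K] [CharZero K] [Field L] [Algebra K L] {N M : ℕ}
    (hM : 0 < M) (G : Subgroup (Matrix.GeneralLinearGroup (Fin N) K)) [Finite G]
    (hG : ∀ g ∈ G, ∃ f : Fin N → L, (∀ i, f i ^ M = 1) ∧
      algebraMap K L (g : Matrix (Fin N) (Fin N) K).trace = ∑ i, f i) :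
    Nat.card G ≤ (M ^ N) ^ (N * N) := by
  classical
  let ι : G → Matrix (Fin N) (Fin N) K := fun g => ((g : Matrix.GeneralLinearGroup (Fin N) K) : _)
  obtain ⟨b, hb, hspan, -⟩ := Submodule.exists_fun_fin_finrank_span_eq K (Set.range ι)
  generalize hr : Module.finrank K (Submodule.span K (Set.range ι)) = r at b hb hspan
  have hrN : r ≤ N * N := by
    rw [← hr]
    refine (Submodule.finrank_le _).trans ?_
    simp [Module.finrank_matrix]
  choose c hc using hb
  let T : Finset L := (Fintype.piFinset (fun _ : Fin N => Polynomial.nthRootsFinset M (1 : L))).image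
    (fun f => ∑ i, f i)
  have hT : T.card ≤ M ^ N := by
    refine Finset.card_image_le.trans ?_
    rw [Fintype.card_piFinset, Finset.prod_const, Finset.card_univ, Fintype.card_fin]
    refine Nat.pow_le_pow_left ?_ _
    exact (Multiset.toFinset_card_le _).trans (Polynomial.card_nthRoots _ _)
  have htT : ∀ g : G, algebraMap K L (ι g).trace ∈ T := by
    intro g
    obtain ⟨f, hf, h⟩ := hG g g.2
    refine Finset.mem_image.mpr ⟨f, ?_, h.symm⟩
    rw [Fintype.mem_piFinset]
    exact fun i => (Polynomial.mem_nthRootsFinset hM _).mpr (hf i)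
  let Φ : G → (Fin r → T) := fun g i => ⟨algebraMap K L (ι (g * c i)).trace, htT _⟩
  have hΦ : Function.Injective Φ := by
    intro g h hgh
    have h1 : ∀ i, (ι g * b i).trace = (ι h * b i).trace := by
      intro i
      have := congrArg Subtype.val (congrFun hgh i)
      have h2 := (algebraMap K L).injective this
      rw [← hc i]
      exact h2
    have h2 : ∀ x ∈ Submodule.span K (Set.range b), (ι g * x).trace = (ι h * x).trace := by
      intro x hx
      induction hx using Submodule.span_induction with
      | mem x hx => obtain ⟨i, rfl⟩ := hx; exact h1 i
      | zero => simp
      | add x y _ _ hx hy => simp [mul_add, hx, hy]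
      | smul a x _ hx => simp [hx]
    have h3 : ∀ x : G, (ι (g * x)).trace = (ι (h * x)).trace := by
      intro x
      exact h2 (ι x) (hspan ▸ Submodule.subset_span ⟨x, rfl⟩)
    have hpow : ∀ (x : G) n, ι (x ^ n) = ι x ^ n := by intro x n; simp [ι]
    have h4 : ∀ n : ℕ, (ι (g * h⁻¹) ^ n).trace = N := by
      intro n
      induction n with
      | zero => simp
      | succ n ih =>
        rw [← ih, ← hpow, ← hpow, pow_succ', mul_assoc, h3]
        simp
    have h5 : ι (g * h⁻¹) = 1 := by
      refine aux_proj _ (Nat.card G) Nat.card_pos ?_ h4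
      rw [← hpow, pow_card_eq_one']
      simp [ι]
    have h6 : g * h⁻¹ = 1 := by
      apply Subtype.ext
      apply Units.ext
      exact h5
    exact mul_inv_eq_one.mp h6
  calc Nat.card G ≤ Nat.card (Fin r → T) := Nat.card_le_card_of_injective Φ hΦ
    _ = T.card ^ r := by simp
    _ ≤ (M ^ N) ^ r := Nat.pow_le_pow_left hT _
    _ ≤ (M ^ N) ^ (N * N) := Nat.pow_le_pow_right (pow_pos hM _) hrN

/-- Lemma 7.1: for `k` finitely generated over `ℚ`, the finite subgroups of `GL_N(K)`
are uniformly bounded as `K` ranges over finitely generated extensions of `k` in which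
`k` is algebraically closed. -/
theorem uniformly_bounded_finite_subgroups_GL
    (k : Type) [Field k] [CharZero k]
    (hk : ∃ S : Finset k, IntermediateField.adjoin ℚ (S : Set k) = ⊤)
    (N : ℕ) (hN : 0 < N) :
    ∃ B : ℕ, ∀ (K : Type) [Field K] [Algebra k K],
      (∃ S : Finset K, IntermediateField.adjoin k (S : Set K) = ⊤) →
      (∀ x : K, IsAlgebraic k x → ∃ y : k, algebraMap k K y = x) →
      ∀ G : Subgroup (Matrix.GeneralLinearGroup (Fin N) K),
        Finite G → Nat.card G ≤ B := by
  obtain ⟨D, hD⟩ := aux_deg k hk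
  refine ⟨((2 * (D * N)).factorial ^ N) ^ (N * N), ?_⟩
  intro K _ _ _ hcl G hG
  have : CharZero K := charZero_of_injective_algebraMap (algebraMap k K).injective
  have : CharZero (AlgebraicClosure K) :=
    charZero_of_injective_algebraMap (algebraMap K (AlgebraicClosure K)).injective
  refine aux_card (L := AlgebraicClosure K) (Nat.factorial_pos _) G ?_
  intro g hg
  refine aux_trace (AlgebraicClosure K) (g : Matrix (Fin N) (Fin N) K) (Nat.card G) Nat.card_pos
    ?_ D ?_
  · have h1 : (⟨g, hg⟩ : G) ^ Nat.card G = 1 := pow_card_eq_one'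
    have h2 : g ^ Nat.card G = 1 := congrArg Subtype.val h1
    have h3 := congrArg Units.val h2
    simpa using h3
  · intro z hz
    exact (hD _ z hz).trans (Nat.mul_le_mul_left _ (aux_lift hcl z hz.tower_top))
end

section
/- Let k be a field of characteristic zero that is finitely generated as a field extension of ℚ, and let N be a positive integer. Then there exists a constant C = C(k, N) such that for every field extension K of k in which k is algebraically closed (every element of K algebraic over k lies in the image of k), every element g ∈ GL_N(K) of finite order has order at most C. -/
open Polynomial

lemma dvd_factorial_of_totient_le (M d : ℕ) (hd : 0 < d) (h : Nat.totient d ≤ M) :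
    d ∣ (2 * M).factorial := by
  rw [Nat.dvd_iff_prime_pow_dvd_dvd]
  intro p e hp hpe
  rcases Nat.eq_zero_or_pos e with rfl | he
  · simp
  apply Nat.dvd_factorial (pow_pos hp.pos _)
  have h1 : Nat.totient (p ^ e) ≤ Nat.totient d :=
    Nat.le_of_dvd (Nat.totient_pos.2 hd) (Nat.totient_dvd_of_dvd hpe)
  rw [Nat.totient_prime_pow hp he] at h1
  obtain ⟨e, rfl⟩ : ∃ f, e = f + 1 := ⟨e - 1, by omega⟩
  have h2 : p ≤ 2 * (p - 1) := by have := hp.two_le; omega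
  calc p ^ (e + 1) = p ^ e * p := pow_succ _ _
    _ ≤ p ^ e * (2 * (p - 1)) := by gcongr
    _ = 2 * (p ^ (e + 1 - 1) * (p - 1)) := by simp; ring
    _ ≤ 2 * M := by omega

lemma dvd_of_dvd_X_pow_sub_one (M n : ℕ) (hn : 0 < n) (q : ℚ[X]) (hq : q ∣ X ^ n - 1)
    (hM : q.natDegree ≤ M) : q ∣ X ^ ((2 * M).factorial) - 1 := by
  have hne : (X ^ n - 1 : ℚ[X]) ≠ 0 := (monic_X_pow_sub_C (1 : ℚ) hn.ne').ne_zero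
  have hq0 : q ≠ 0 := fun h => by subst h; exact hne (zero_dvd_iff.1 hq)
  have hsep : q.Separable := by
    refine Separable.of_dvd ?_ hq
    have := (separable_X_pow_sub_C (1 : ℚ) (n := n) (by exact_mod_cast hn.ne') one_ne_zero)
    simpa using this
  have hsq : (q.map (algebraMap ℚ ℂ)).Separable := hsep.map
  rw [← Polynomial.map_dvd_map' (algebraMap ℚ ℂ)]
  have hspl := IsAlgClosed.splits (q.map (algebraMap ℚ ℂ))
  have hne2 : (X ^ ((2 * M).factorial) - 1 : ℂ[X]) ≠ 0 :=
    (monic_X_pow_sub_C (1 : ℂ) (Nat.factorial_pos _).ne').ne_zero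
  have hmap : (X ^ ((2 * M).factorial) - 1 : ℚ[X]).map (algebraMap ℚ ℂ)
      = X ^ ((2 * M).factorial) - 1 := by
    rw [Polynomial.map_sub, Polynomial.map_pow, map_X, Polynomial.map_one]
  rw [hmap]
  rw [hspl.dvd_iff_roots_le_roots (by simpa using hq0) hne2]
  rw [Multiset.le_iff_subset (nodup_roots hsq)]
  intro z hz
  have hz' : aeval z q = 0 := by
    have := (mem_roots'.1 hz).2
    rw [aeval_def, eval₂_eq_eval_map]
    exact this
  have hzn : z ^ n = 1 := by
    obtain ⟨r, hr⟩ := hq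
    have := congrArg (aeval z) hr
    simp [hz'] at this
    linear_combination this
  have hfin : IsOfFinOrder z := isOfFinOrder_iff_pow_eq_one.2 ⟨n, hn, hzn⟩
  have hprim : IsPrimitiveRoot z (orderOf z) := IsPrimitiveRoot.orderOf z
  have hpos : 0 < orderOf z := hfin.orderOf_pos
  have hdvd : cyclotomic (orderOf z) ℚ ∣ q := by
    rw [cyclotomic_eq_minpoly_rat hprim hpos]
    exact minpoly.dvd _ _ hz'
  have hle := natDegree_le_of_dvd hdvd hq0
  rw [natDegree_cyclotomic] at hle
  have := dvd_factorial_of_totient_le M _ hpos (hle.trans hM)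
  rw [mem_roots hne2]
  simp [IsRoot, orderOf_dvd_iff_pow_eq_one.1 this]

lemma const_of_isIntegral {ι Q₀ : Type*} [Field Q₀] (p : MvPolynomial ι Q₀) (hp : IsIntegral Q₀ p) :
    ∃ c : Q₀, MvPolynomial.C c = p := by
  by_cases h0 : p = 0
  · exact ⟨0, by simp [h0]⟩
  have hu : IsUnit p := by
    exact IsIntegral.isUnit hp h0
  rw [MvPolynomial.isUnit_iff_eq_C_of_isReduced] at hu
  obtain ⟨r, _, h⟩ := hu
  exact ⟨r, h.symm⟩

lemma exists_rat_of_isIntegral {ι Q₀ E : Type*} [Field Q₀] [Field E] [Algebra Q₀ E] {x : ι → E}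
    (hx : AlgebraicIndependent Q₀ x) (y : IntermediateField.adjoin Q₀ (Set.range x))
    (hy : IsIntegral Q₀ y) : ∃ c : Q₀, algebraMap Q₀ _ c = y := by
  have h1 : IsIntegral Q₀ (hx.aevalEquivField.symm y) := hy.map hx.aevalEquivField.symm
  have h2 : IsIntegral (MvPolynomial ι Q₀) (hx.aevalEquivField.symm y) := h1.tower_top
  obtain ⟨p, hp⟩ := IsIntegrallyClosed.isIntegral_iff.1 h2
  have h3 : IsIntegral Q₀ p := by
    rw [← hp] at h1
    exact (isIntegral_algebraMap_iff
      (IsFractionRing.injective (MvPolynomial ι Q₀) (FractionRing (MvPolynomial ι Q₀)))).1 h1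
  obtain ⟨c, hc⟩ := const_of_isIntegral p h3
  refine ⟨c, ?_⟩
  have : hx.aevalEquivField.symm y = algebraMap Q₀ _ c := by
    rw [← hp, ← hc, IsScalarTower.algebraMap_apply Q₀ (MvPolynomial ι Q₀), MvPolynomial.algebraMap_eq]
  have h4 := congrArg hx.aevalEquivField this
  simpa only [AlgEquiv.apply_symm_apply, AlgEquiv.commutes] using h4.symm

/-- `k` is finite over a field in which `ℚ` is algebraically closed. -/
lemma exists_subfield (k : Type) [Field k] [CharZero k]
    (hk : ∃ S : Finset k, IntermediateField.adjoin ℚ (S : Set k) = ⊤) :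
    ∃ F : IntermediateField ℚ k, FiniteDimensional F k ∧
      ∀ y : F, IsIntegral ℚ y → ∃ c : ℚ, algebraMap ℚ F c = y := by
  obtain ⟨S, hS⟩ := hk
  obtain ⟨s, hs⟩ := exists_isTranscendenceBasis ℚ k
  refine ⟨IntermediateField.adjoin ℚ (Set.range ((↑) : s → k)), ?_,
    fun y hy => exists_rat_of_isIntegral hs.1 y hy⟩
  have alg := hs.isAlgebraic_field
  set F := IntermediateField.adjoin ℚ (Set.range ((↑) : s → k))
  have htop : IntermediateField.adjoin F (S : Set k) = ⊤ := by
    rw [eq_top_iff]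
    intro a _
    have ha : a ∈ IntermediateField.adjoin ℚ (S : Set k) := by rw [hS]; trivial
    have hle : IntermediateField.adjoin ℚ (S : Set k) ≤
        (IntermediateField.adjoin F (S : Set k)).restrictScalars ℚ :=
      IntermediateField.adjoin_le_iff.2 (IntermediateField.subset_adjoin F _)
    exact hle ha
  have : FiniteDimensional F (IntermediateField.adjoin F (S : Set k)) :=
    IntermediateField.finiteDimensional_adjoin fun x _ => (alg.isAlgebraic x).isIntegral
  rw [htop] at this
  exact IntermediateField.topEquiv.toLinearEquiv.finiteDimensional

/-- A monic divisor of `X ^ n - 1` over `L` descends to `A` if integers descend. -/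
lemma exists_lift {A L : Type*} [Field A] [Field L] [Algebra A L]
    (h : ∀ y : L, IsIntegral ℤ y → ∃ c : A, algebraMap A L c = y) (n : ℕ) (hn : 0 < n)
    (P : L[X]) (hP : P.Monic) (hd : P ∣ X ^ n - 1) :
    ∃ p : A[X], p.map (algebraMap A L) = P ∧ p.natDegree = P.natDegree ∧ p.Monic ∧
      p ∣ X ^ n - 1 := by
  have hl : P ∈ lifts (algebraMap A L) := by
    rw [lifts_iff_coeff_lifts]
    intro i
    exact h _ (isIntegral_coeff_of_dvd (X ^ n - 1 : ℤ[X]) P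
      (monic_X_pow_sub_C (1 : ℤ) hn.ne') hP (by simpa using hd) i)
  obtain ⟨p, h1, h2, h3⟩ := lifts_and_natDegree_eq_and_monic hl hP
  refine ⟨p, h1, h2, h3, ?_⟩
  rw [← Polynomial.map_dvd_map' (algebraMap A L), h1]
  simpa using hd

/-- The order of a finite-order element of `GL_N(K)` is bounded by a constant depending
only on `k` and `N`, where `k` is finitely generated over `ℚ` and algebraically closed
in `K`. -/
theorem bounded_order_of_finite_order_elements_GL
    (k : Type) [Field k] [CharZero k]
    (hk : ∃ S : Finset k, IntermediateField.adjoin ℚ (S : Set k) = ⊤)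
    (N : ℕ) (hN : 0 < N) :
    ∃ C : ℕ, ∀ (K : Type) [Field K] [Algebra k K],
      (∀ x : K, IsAlgebraic k x → ∃ y : k, algebraMap k K y = x) →
      ∀ g : Matrix.GeneralLinearGroup (Fin N) K, IsOfFinOrder g → orderOf g ≤ C := by
  obtain ⟨F, hfin, hF⟩ := exists_subfield k hk
  refine ⟨(2 * (Module.finrank F k * N)).factorial, ?_⟩
  intro K _ _ hK g hg
  obtain ⟨n, hn, hgn⟩ := isOfFinOrder_iff_pow_eq_one.1 hg
  have hcz : CharZero K := charZero_of_injective_algebraMap (algebraMap k K).injective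
  set G : Matrix (Fin N) (Fin N) K := g.1 with hG
  have hGn : G ^ n = 1 := by rw [hG, ← Units.val_pow_eq_pow_val, hgn, Units.val_one]
  have hPm : (minpoly K G).Monic := minpoly.monic (Algebra.IsIntegral.isIntegral G)
  have hPN : (minpoly K G).natDegree ≤ N := by
    have h := natDegree_le_of_dvd (Matrix.minpoly_dvd_charpoly G) G.charpoly_monic.ne_zero
    simpa [Matrix.charpoly_natDegree_eq_dim] using h
  have hPd : minpoly K G ∣ X ^ n - 1 := minpoly.dvd _ _ (by simp [hGn])
  obtain ⟨p, hp1, hp2, hp3, hp4⟩ := exists_lift (A := k)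
    (fun y hy => hK y (hy.tower_top (A := k)).isAlgebraic) n hn _ hPm hPd
  -- pass to `k[X]/(p)`
  let R := AdjoinRoot p
  let r : R := AdjoinRoot.root p
  let pb := AdjoinRoot.powerBasis' hp3
  have : Module.Finite k R := pb.finite
  have : Module.Finite F R := Module.Finite.trans k R
  have hdim : Module.finrank F R ≤ Module.finrank F k * N := by
    rw [← Module.finrank_mul_finrank F k R, pb.finrank]
    gcongr
    rw [AdjoinRoot.powerBasis'_dim, hp2]
    exact hPN
  have hQm : (minpoly F r).Monic := minpoly.monic (Algebra.IsIntegral.isIntegral r)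
  have hrn : r ^ n = 1 := by
    have := (AdjoinRoot.mk_eq_zero (f := p)).2 hp4
    simpa [sub_eq_zero] using this
  have hQd : minpoly F r ∣ X ^ n - 1 := minpoly.dvd _ _ (by simp [hrn])
  have hQM : (minpoly F r).natDegree ≤ Module.finrank F k * N :=
    (minpoly.natDegree_le r).trans hdim
  obtain ⟨q, hq1, hq2, hq3, hq4⟩ := exists_lift (A := ℚ)
    (fun y hy => hF y hy.tower_top) n hn _ hQm hQd
  have hq5 := dvd_of_dvd_X_pow_sub_one _ n hn q hq4 (hq2.trans_le hQM)
  set T := (2 * (Module.finrank F k * N)).factorial with hT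
  have hrT : r ^ T = 1 := by
    obtain ⟨s, hs⟩ := hq5
    have h0 : aeval r q = 0 := by
      rw [← aeval_map_algebraMap F, hq1, minpoly.aeval]
    have := congrArg (aeval r) hs
    simpa [h0, sub_eq_zero] using this
  have hpT : p ∣ X ^ T - 1 := by
    rw [← AdjoinRoot.mk_eq_zero]
    simpa [sub_eq_zero] using hrT
  have hGT : G ^ T = 1 := by
    obtain ⟨s, hs⟩ := hpT
    have h0 : aeval G p = 0 := by
      rw [← aeval_map_algebraMap K, hp1, minpoly.aeval]
    have := congrArg (aeval G) hs
    simpa [h0, sub_eq_zero] using this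
  have hgT : g ^ T = 1 := by
    apply Units.ext
    rw [Units.val_pow_eq_pow_val, Units.val_one]
    exact hGT
  exact orderOf_le_of_pow_eq_one (Nat.factorial_pos _) hgT
end

section
/- For all positive integers J and B there exists a constant J' = J'(J, B) with the following property: for every group G and every normal subgroup N ⊴ G such that (a) every finite subgroup of N contains a normal abelian subgroup of index at most J, and (b) every finite subgroup of G/N has order at most B, every finite subgroup of G contains a normal abelian subgroup of index at most J'. -/
/-- The normal core of a subgroup of index `k` in a finite group has index at most `k !`. -/
theorem index_normalCore_le_factorial {H : Type*} [Group H] [Finite H] (C : Subgroup H) :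
    C.normalCore.index ≤ C.index.factorial := by
  classical
  rw [Subgroup.normalCore_eq_ker, Subgroup.index_ker]
  refine (Nat.card_le_card_of_injective _ Subtype.val_injective).trans ?_
  rw [Nat.card_perm, Subgroup.index]

/-- Lemma 2.4 (Popov): an extension of a group with bounded finite subgroups by a
Jordan group is Jordan, with constant depending only on the two input constants. -/
theorem jordan_of_extension_jordan_by_bounded
    (J B : ℕ) (hJ : 0 < J) (hB : 0 < B) :
    ∃ J' : ℕ, ∀ (G : Type) [Group G] (N : Subgroup G) [N.Normal],
      (∀ H : Subgroup G, H ≤ N → Finite H →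
        ∃ A : Subgroup H, A.Normal ∧ (∀ x y : A, x * y = y * x) ∧ A.index ≤ J) →
      (∀ H : Subgroup (G ⧸ N), Finite H → Nat.card H ≤ B) →
      ∀ H : Subgroup G, Finite H →
        ∃ A : Subgroup H, A.Normal ∧ (∀ x y : A, x * y = y * x) ∧ A.index ≤ J' := by
  refine ⟨(J * B).factorial, ?_⟩
  intro G _ N _ hN hQ H hH
  have hK : Finite (H ⊓ N : Subgroup G) :=
    Finite.of_injective _ (Subgroup.inclusion_injective (inf_le_left : H ⊓ N ≤ H))
  obtain ⟨A, -, hcomm, hidx⟩ := hN (H ⊓ N) inf_le_right hK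
  let i := Subgroup.inclusion (inf_le_left : H ⊓ N ≤ H)
  have hi : Function.Injective i := Subgroup.inclusion_injective _
  have hr : i.range.index ≤ B := by
    let f := (QuotientGroup.mk' N).comp H.subtype
    have e : i.range = f.ker := by
      ext x
      constructor
      · rintro ⟨y, rfl⟩
        simpa [f, i, MonoidHom.mem_ker] using y.2.2
      · intro hx
        have hx' : (x : G) ∈ N := by simpa [f, MonoidHom.mem_ker] using hx
        exact ⟨⟨x, x.2, hx'⟩, rfl⟩
    rw [e, Subgroup.index_ker]
    exact hQ _ (Finite.of_surjective _ f.rangeRestrict_surjective)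
  have hC : (A.map i).index ≤ J * B := by
    rw [Subgroup.index_map_of_injective A hi]
    exact Nat.mul_le_mul hidx hr
  refine ⟨(A.map i).normalCore, inferInstance, ?_,
    (index_normalCore_le_factorial _).trans (Nat.factorial_le hC)⟩
  rintro ⟨x, hx⟩ ⟨y, hy⟩
  obtain ⟨a, ha, rfl⟩ := Subgroup.normalCore_le _ hx
  obtain ⟨b, hb, rfl⟩ := Subgroup.normalCore_le _ hy
  have h := congrArg Subtype.val (hcomm ⟨a, ha⟩ ⟨b, hb⟩)
  apply Subtype.ext
  have h2 := congrArg i h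
  simpa using h2
end

section
/- Let R₁ and R₂ be positive integers. Let G be a group and N ⊴ G a normal subgroup such that every finite abelian subgroup of N can be generated by at most R₁ elements and every finite abelian subgroup of G/N can be generated by at most R₂ elements. Then every finite abelian subgroup of G can be generated by at most R₁ + R₂ elements. -/
/-- Lemma 2.8: an extension of a group with finite abelian subgroups of rank at most
`R₂` by a group with finite abelian subgroups of rank at most `R₁` has finite abelian
subgroups of rank at most `R₁ + R₂`. -/
theorem rank_bound_of_extension
    (R₁ R₂ : ℕ) (hR₁ : 0 < R₁) (hR₂ : 0 < R₂)
    (G : Type) [Group G] (N : Subgroup G) [N.Normal]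
    (h1 : ∀ H : Subgroup G, H ≤ N → Finite H → (∀ x y : H, x * y = y * x) →
      ∃ S : Finset G, S.card ≤ R₁ ∧ Subgroup.closure (S : Set G) = H)
    (h2 : ∀ H : Subgroup (G ⧸ N), Finite H → (∀ x y : H, x * y = y * x) →
      ∃ S : Finset (G ⧸ N), S.card ≤ R₂ ∧ Subgroup.closure (S : Set (G ⧸ N)) = H)
    (H : Subgroup G) (hfin : Finite H) (hab : ∀ x y : H, x * y = y * x) :
    ∃ S : Finset G, S.card ≤ R₁ + R₂ ∧ Subgroup.closure (S : Set G) = H := by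
  classical
  obtain ⟨S₁, hc₁, hS₁⟩ := h1 (H ⊓ N) inf_le_right
    (Finite.of_injective (Subgroup.inclusion (inf_le_left : H ⊓ N ≤ H))
      (Subgroup.inclusion_injective _))
    (by
      rintro ⟨x, hx⟩ ⟨y, hy⟩
      have h := congrArg Subtype.val (hab ⟨x, hx.1⟩ ⟨y, hy.1⟩)
      exact Subtype.ext h)
  obtain ⟨S₂, hc₂, hS₂⟩ := h2 (H.map (QuotientGroup.mk' N))
    ((Set.toFinite (H : Set G)).image (QuotientGroup.mk' N)).to_subtype
    (by
      rintro ⟨_, x, hx, rfl⟩ ⟨_, y, hy, rfl⟩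
      have h : x * y = y * x := congrArg Subtype.val (hab ⟨x, hx⟩ ⟨y, hy⟩)
      apply Subtype.ext
      change QuotientGroup.mk' N x * QuotientGroup.mk' N y =
        QuotientGroup.mk' N y * QuotientGroup.mk' N x
      rw [← map_mul, ← map_mul, h])
  have hl : ∀ s : G ⧸ N, ∃ g : G, s ∈ S₂ → g ∈ H ∧ QuotientGroup.mk' N g = s := by
    intro s
    by_cases hs : s ∈ S₂
    · have : s ∈ H.map (QuotientGroup.mk' N) := hS₂ ▸ Subgroup.subset_closure hs
      obtain ⟨g, hg, hgs⟩ := this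
      exact ⟨g, fun _ => ⟨hg, hgs⟩⟩
    · exact ⟨1, fun h => absurd h hs⟩
  choose f hf using hl
  refine ⟨S₁ ∪ S₂.image f, (Finset.card_union_le _ _).trans
    (add_le_add hc₁ (Finset.card_image_le.trans hc₂)), le_antisymm ?_ ?_⟩
  · rw [Subgroup.closure_le]
    intro x hx
    rcases Finset.mem_union.1 (Finset.mem_coe.1 hx) with hx | hx
    · have : x ∈ H ⊓ N := hS₁ ▸ Subgroup.subset_closure hx
      exact this.1
    · obtain ⟨s, hs, rfl⟩ := Finset.mem_image.1 hx
      exact (hf s hs).1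
  · set K := Subgroup.closure ((S₁ ∪ S₂.image f : Finset G) : Set G) with hK
    have hNK : H ⊓ N ≤ K := by
      rw [← hS₁]
      exact Subgroup.closure_mono (fun x hx => Finset.mem_union_left _ hx)
    have hKH : K ≤ H := by
      rw [hK, Subgroup.closure_le]
      intro x hx
      rcases Finset.mem_union.1 (Finset.mem_coe.1 hx) with hx | hx
      · have : x ∈ H ⊓ N := hS₁ ▸ Subgroup.subset_closure hx
        exact this.1
      · obtain ⟨s, hs, rfl⟩ := Finset.mem_image.1 hx
        exact (hf s hs).1
    have hm : H.map (QuotientGroup.mk' N) ≤ K.map (QuotientGroup.mk' N) := by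
      rw [← hS₂, Subgroup.closure_le]
      intro s hs
      exact ⟨f s, Subgroup.subset_closure
        (Finset.mem_union_right _ (Finset.mem_image_of_mem f hs)), (hf s hs).2⟩
    intro x hx
    obtain ⟨k, hk, hkx⟩ := hm ⟨x, hx, rfl⟩
    have hn : k⁻¹ * x ∈ N := QuotientGroup.eq.1 hkx
    have := K.mul_mem hk (hNK ⟨H.mul_mem (H.inv_mem (hKH hk)) hx, hn⟩)
    simpa using this
end

section
/- For all positive integers B, J and R there exists a constant J' = J'(B, J, R) with the following property: for every group G and every normal subgroup N ⊴ G such that (a) every finite subgroup of N has order at most B, (b) every finite subgroup of G/N contains a normal abelian subgroup of index at most J, and (c) every finite abelian subgroup of G/N can be generated by at most R elements, every finite subgroup of G contains a normal abelian subgroup of index at most J'. -/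
theorem center_index_le_aux {P Q : Type*} [Group P] [Finite P] [Group Q] (g : P →* Q)
    (B R : ℕ) (hK : Nat.card g.ker ≤ B) (S : Finset Q) (hS : S.card ≤ R)
    (hcl : Subgroup.closure (S : Set Q) = g.range)
    (hcomm : ∀ x y : P, g x * g y = g y * g x) :
    (Subgroup.center P).index ≤ B ^ (B + R) := by
  classical
  have hBpos : 0 < B := lt_of_lt_of_le Nat.card_pos hK
  have h1 := Subgroup.index_center_le_pow P
  have h2 : Nat.card (commutatorSet P) ≤ B := by
    refine le_trans ?_ hK
    refine Nat.card_mono (s := commutatorSet P) (t := (g.ker : Set P)) (Set.toFinite _) ?_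
    rintro _ ⟨x, y, rfl⟩
    simp only [SetLike.mem_coe, MonoidHom.mem_ker, map_commutatorElement]
    exact commutatorElement_eq_one_iff_mul_comm.mpr (hcomm x y)
  have hlift : ∀ s : S, ∃ p : P, g p = s := by
    intro s
    have : (s : Q) ∈ g.range := hcl ▸ Subgroup.subset_closure s.2
    exact this
  choose l hl using hlift
  let T : Finset P := (Set.toFinite (g.ker : Set P)).toFinset ∪ S.attach.image l
  have hT : T.card ≤ B + R := by
    refine (Finset.card_union_le _ _).trans (add_le_add ?_ ?_)
    · rw [← Set.ncard_eq_toFinset_card]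
      exact hK
    · exact Finset.card_image_le.trans (by simpa using hS)
  have hTtop : Subgroup.closure (T : Set P) = ⊤ := by
    have hker : g.ker ≤ Subgroup.closure (T : Set P) := by
      intro x hx
      apply Subgroup.subset_closure
      simp only [T, Finset.coe_union, Set.Finite.coe_toFinset]
      exact Or.inl hx
    have hmap : g.range ≤ (Subgroup.closure (T : Set P)).map g := by
      rw [← hcl, Subgroup.closure_le]
      intro s hs
      refine ⟨l ⟨s, hs⟩, Subgroup.subset_closure ?_, hl ⟨s, hs⟩⟩
      simp only [T, Finset.coe_union]
      exact Or.inr (by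
        simp only [Finset.coe_image]
        exact ⟨⟨s, hs⟩, by simp, rfl⟩)
    rw [eq_top_iff]
    intro x _
    obtain ⟨y, hy, hxy⟩ := hmap ⟨x, rfl⟩
    have : y⁻¹ * x ∈ g.ker := by
      rw [MonoidHom.mem_ker, map_mul, map_inv, hxy, inv_mul_cancel]
    simpa using mul_mem hy (hker this)
  have h3 : Group.rank P ≤ B + R := (Group.rank_le hTtop).trans hT
  calc _ ≤ _ := h1
    _ ≤ B ^ Group.rank P := Nat.pow_le_pow_left h2 _
    _ ≤ _ := Nat.pow_le_pow_right hBpos h3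

/-- Lemma 2.9 (Klyachko): an extension of a group that is Jordan (constant `J`) and has
finite abelian subgroups of rank at most `R` by a group with finite subgroups of order
at most `B` is Jordan with constant depending only on `B`, `J`, `R`. -/
theorem jordan_of_extension_bounded_by_jordan_with_bounded_rank
    (B J R : ℕ) (hB : 0 < B) (hJ : 0 < J) (hR : 0 < R) :
    ∃ J' : ℕ, ∀ (G : Type) [Group G] (N : Subgroup G) [N.Normal],
      (∀ H : Subgroup G, H ≤ N → Finite H → Nat.card H ≤ B) →
      (∀ H : Subgroup (G ⧸ N), Finite H →
        ∃ A : Subgroup H, A.Normal ∧ (∀ x y : A, x * y = y * x) ∧ A.index ≤ J) →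
      (∀ H : Subgroup (G ⧸ N), Finite H → (∀ x y : H, x * y = y * x) →
        ∃ S : Finset (G ⧸ N), S.card ≤ R ∧ Subgroup.closure (S : Set (G ⧸ N)) = H) →
      ∀ H : Subgroup G, Finite H →
        ∃ A : Subgroup H, A.Normal ∧ (∀ x y : A, x * y = y * x) ∧ A.index ≤ J' := by
  refine ⟨B ^ (B + R) * J, ?_⟩
  intro G _ N _ hN hQ hrk H hH
  let f : H →* H.map (QuotientGroup.mk' N) := (QuotientGroup.mk' N).subgroupMap H
  have hf : Function.Surjective f := MonoidHom.subgroupMap_surjective _ _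
  have hfin : Finite (H.map (QuotientGroup.mk' N)) := Finite.of_surjective f hf
  obtain ⟨A, hA, hAc, hAi⟩ := hQ _ hfin
  let P : Subgroup H := A.comap f
  have hP : P.Normal := hA.comap f
  have hPi : P.index ≤ J := by
    rw [Subgroup.index_comap_of_surjective _ hf]; exact hAi
  let g : P →* G ⧸ N := (QuotientGroup.mk' N).comp (H.subtype.comp P.subtype)
  have hgr : g.range = A.map (Subgroup.subtype _) := by
    ext x
    constructor
    · rintro ⟨p, rfl⟩
      exact ⟨f p, p.2, rfl⟩
    · rintro ⟨a, ha, rfl⟩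
      obtain ⟨h, rfl⟩ := hf a
      exact ⟨⟨h, ha⟩, rfl⟩
  have hcomm : ∀ x y : P, g x * g y = g y * g x := by
    intro x y
    have := hAc ⟨f x, x.2⟩ ⟨f y, y.2⟩
    exact congrArg (fun z : A => ((z : H.map (QuotientGroup.mk' N)) : G ⧸ N)) this
  obtain ⟨S, hS, hcl⟩ := hrk g.range (Finite.of_surjective _ g.rangeRestrict_surjective) (by
    rintro ⟨_, x, rfl⟩ ⟨_, y, rfl⟩
    exact Subtype.ext (hcomm x y))
  have hK : Nat.card g.ker ≤ B := by
    have hinj : Function.Injective (H.subtype.comp P.subtype) :=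
      H.subtype_injective.comp P.subtype_injective
    rw [← Subgroup.card_map_of_injective (K := g.ker) hinj]
    refine hN _ ?_ ?_
    · rintro _ ⟨x, hx, rfl⟩
      exact (QuotientGroup.eq_one_iff _).mp hx
    · exact Finite.of_surjective _
        (MonoidHom.subgroupMap_surjective (H.subtype.comp P.subtype) g.ker)
  have hZ := center_index_le_aux g B R hK S hS hcl hcomm
  refine ⟨(Subgroup.center P).map P.subtype, inferInstance, ?_, ?_⟩
  · rintro ⟨_, x, hx, rfl⟩ ⟨_, y, hy, rfl⟩
    apply Subtype.ext
    exact congrArg P.subtype (Subgroup.mem_center_iff.mp hy x)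
  · rw [Subgroup.index_map_subtype]
    exact Nat.mul_le_mul hZ hPi
end

section
/- Let G be a finite group with a normal subgroup F ⊴ G such that the quotient G/F is abelian and can be generated by r elements, where r ≥ 1. Then the index of the center Z(G) in G satisfies [G : Z(G)] ≤ |F|^(r·|F|). -/
/-- The key computation in the proof of Lemma 2.9: for a finite group `G` with a normal
subgroup `F` whose quotient is abelian and generated by `r ≥ 1` elements, the index of
the center of `G` is at most `|F|^(r * |F|)`. -/
theorem index_center_le_of_abelian_quotient
    (G : Type) [Group G] [Finite G] (F : Subgroup G) [F.Normal]
    (r : ℕ) (hr : 1 ≤ r)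
    (hab : ∀ x y : G ⧸ F, x * y = y * x)
    (hgen : ∃ S : Finset (G ⧸ F), S.card ≤ r ∧
      Subgroup.closure (S : Set (G ⧸ F)) = ⊤) :
    (Subgroup.center G).index ≤ Nat.card F ^ (r * Nat.card F) := by
  classical
  obtain ⟨S, hS, hcl⟩ := hgen
  have hFpos : 0 < Nat.card F := Nat.card_pos
  have hcomm : Nat.card (commutatorSet G) ≤ Nat.card F := by
    have hsub : commutatorSet G ⊆ (F : Set G) := by
      rintro _ ⟨a, b, rfl⟩
      rw [SetLike.mem_coe, ← QuotientGroup.eq_one_iff]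
      have h := hab (a : G ⧸ F) (b : G ⧸ F)
      rw [commutatorElement_def]
      rw [QuotientGroup.mk_mul, QuotientGroup.mk_mul, QuotientGroup.mk_mul, QuotientGroup.mk_inv,
        QuotientGroup.mk_inv]
      rw [h]
      group
    exact Nat.card_mono (Set.toFinite _) hsub
  have hrank : Group.rank G ≤ r * Nat.card F := by
    let T : Finset G := S.image Quotient.out
    let U : Finset G := (Set.toFinite (F : Set G)).toFinset.erase 1
    have hU : U.card = Nat.card F - 1 := by
      rw [Finset.card_erase_of_mem (by simp [F.one_mem])]
      congr 1
      exact (Nat.card_eq_card_finite_toFinset (Set.toFinite (F : Set G))).symm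
    have hTU : (T ∪ U).card ≤ r * Nat.card F := by
      have h1 := Finset.card_union_le T U
      have h2 : T.card ≤ S.card := Finset.card_image_le
      obtain ⟨a, rfl⟩ := Nat.exists_eq_add_of_le hr
      obtain ⟨f, hf⟩ := Nat.exists_eq_add_of_le (Nat.succ_le_of_lt hFpos)
      rw [hf] at hU ⊢
      simp only [Nat.succ_eq_add_one] at *
      have : (T ∪ U).card ≤ 1 + a + f := by omega
      nlinarith [Nat.zero_le (a * f)]
    refine (Group.rank_le (S := T ∪ U) ?_).trans hTU
    set H := Subgroup.closure ((T ∪ U : Finset G) : Set G) with hH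
    have hFH : F ≤ H := by
      intro x hx
      by_cases h1 : x = 1
      · rw [h1]; exact H.one_mem
      · exact Subgroup.subset_closure (by simp [U, h1, hx])
    have hmap : H.map (QuotientGroup.mk' F) = ⊤ := by
      rw [eq_top_iff, ← hcl, Subgroup.closure_le]
      intro s hs
      refine ⟨Quotient.out s, Subgroup.subset_closure ?_, ?_⟩
      · exact Finset.mem_coe.2 (Finset.mem_union_left _ (Finset.mem_image_of_mem _ hs))
      · exact Quotient.out_eq s
    have h := Subgroup.comap_map_eq (QuotientGroup.mk' F) H
    rw [hmap, QuotientGroup.ker_mk', Subgroup.comap_top, sup_eq_left.2 hFH] at h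
    exact h.symm
  calc (Subgroup.center G).index ≤ Nat.card (commutatorSet G) ^ Group.rank G :=
        Subgroup.index_center_le_pow G
    _ ≤ Nat.card F ^ Group.rank G := Nat.pow_le_pow_left hcomm _
    _ ≤ Nat.card F ^ (r * Nat.card F) := Nat.pow_le_pow_right hFpos hrank
end

section
/- Let G be a group generated by N elements (for a positive integer N) whose commutator subgroup K = [G, G] is finite. Then the center Z(G) has finite index in G and [G : Z(G)] ≤ |K|^N. -/
/-- If a group `G` is generated by `N` elements and has finite commutator subgroup `K`,
then its center has finite index, at most `|K|^N`. -/
theorem index_center_le_of_finite_commutator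
    (G : Type) [Group G] (N : ℕ) (hN : 0 < N)
    (hgen : ∃ S : Finset G, S.card ≤ N ∧ Subgroup.closure (S : Set G) = ⊤)
    (hK : Finite (commutator G)) :
    (Subgroup.center G).index ≠ 0 ∧
      (Subgroup.center G).index ≤ Nat.card (commutator G) ^ N := by
  obtain ⟨S, hS1, hS2⟩ := hgen
  have hsub : commutatorSet G ⊆ (commutator G : Set G) := by
    rw [commutator_eq_closure]
    exact Subgroup.subset_closure
  have hfin : Finite (commutatorSet G) := Set.Finite.subset (s := (commutator G : Set G)) hK hsub
  have hcard : Nat.card (commutatorSet G) ≤ Nat.card (commutator G) :=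
    Nat.card_mono (t := (commutator G : Set G)) hK hsub
  have hpos : 0 < Nat.card (commutator G) := Nat.card_pos
  let e := Subgroup.quotientCenterEmbedding hS2
  have hq : Finite (G ⧸ Subgroup.center G) := Finite.of_injective e e.injective
  refine ⟨Nat.card_pos.ne', ?_⟩
  calc (Subgroup.center G).index
      ≤ Nat.card (↥(S : Set G) → commutatorSet G) := Finite.card_le_of_embedding e
    _ = Nat.card (commutatorSet G) ^ S.card := by simp [Nat.card_fun]
    _ ≤ Nat.card (commutator G) ^ S.card := Nat.pow_le_pow_left hcard _
    _ ≤ Nat.card (commutator G) ^ N := Nat.pow_le_pow_right hpos hS1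
end

section
/- For all positive integers J₁ and J₂ there exists a constant J = J(J₁, J₂) with the following property: for every group G and every normal subgroup N ⊴ G such that every finite subgroup of N contains a solvable subgroup of index at most J₁ and every finite subgroup of G/N contains a solvable subgroup of index at most J₂, every finite subgroup of G contains a solvable subgroup of index at most J. -/
theorem sj_solv_of_map {X Y : Type*} [Group X] [Group Y] (f : X →* Y) (S : Subgroup X)
    (h1 : Group.IsSolvable ↥(S ⊓ f.ker)) (h2 : Group.IsSolvable ↥(S.map f)) : Group.IsSolvable S := by
  let g : S →* S.map f := f.subgroupMap S
  refine Group.isSolvable_of_ker_le_range (Subgroup.inclusion (inf_le_left : S ⊓ f.ker ≤ S)) g ?_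
  intro x hx
  have hx' : f x = 1 := by
    have := congrArg Subtype.val (MonoidHom.mem_ker.1 hx)
    simpa [g] using this
  exact ⟨⟨x.1, x.2, hx'⟩, rfl⟩

theorem sj_solv_of_le {X : Type*} [Group X] {A B : Subgroup X} (h : A ≤ B)
    (hB : Group.IsSolvable B) : Group.IsSolvable A :=
  Group.isSolvable_of_isSolvable_injective (Subgroup.inclusion_injective h)

theorem sj_solv_map {X Y : Type*} [Group X] [Group Y] (f : X →* Y) (S : Subgroup X)
    (h : Group.IsSolvable S) : Group.IsSolvable ↥(S.map f) :=
  Group.isSolvable_of_surjective (f.subgroupMap_surjective S)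

theorem sj_sup {X : Type*} [Group X] (A B : Subgroup X) [B.Normal]
    (hA : Group.IsSolvable A) (hB : Group.IsSolvable B) : Group.IsSolvable ↥(A ⊔ B) := by
  apply sj_solv_of_map (QuotientGroup.mk' B)
  · exact sj_solv_of_le (by simp) hB
  · rw [Subgroup.map_sup, QuotientGroup.map_mk'_self, sup_bot_eq]
    exact sj_solv_map _ _ hA

/-- A finite group has a characteristic solvable subgroup containing all normal solvable ones. -/
theorem sj_radical (K : Type*) [Group K] [Finite K] :
    ∃ R : Subgroup K, R.Characteristic ∧ Group.IsSolvable R ∧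
      ∀ A : Subgroup K, A.Normal → Group.IsSolvable A → A ≤ R := by
  obtain ⟨R, hR⟩ := (Set.toFinite {A : Subgroup K | A.Normal ∧ Group.IsSolvable A}).exists_maximal
    ⟨⊥, by constructor <;> infer_instance⟩
  have key : ∀ A : Subgroup K, A.Normal → Group.IsSolvable A → A ≤ R := by
    intro A hA hA'
    have hn := hR.1.1
    have : R ⊔ A ≤ R := hR.2 (y := R ⊔ A) ⟨inferInstance, sj_sup R A hR.1.2 hA'⟩ le_sup_left
    exact le_sup_right.trans this
  refine ⟨R, ?_, hR.1.2, key⟩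
  rw [Subgroup.characteristic_iff_map_le]
  intro φ
  refine key _ ?_ (sj_solv_map _ _ hR.1.2)
  exact hR.1.1.map _ φ.surjective

theorem sj_card_perm (α : Type*) [Finite α] : Nat.card (Equiv.Perm α) = (Nat.card α).factorial := by
  exact Nat.card_perm

theorem sj_core_index {K : Type*} [Group K] [Finite K] (S : Subgroup K) :
    S.normalCore.index ≤ S.index.factorial := by
  rw [Subgroup.normalCore_eq_ker, Subgroup.index_ker, Subgroup.index, ← Nat.card_perm]
  exact Nat.card_le_card_of_injective _ Subtype.val_injective

theorem sj_main {X Y : Type*} [Group X] [Group Y] [Finite X] (J₁ J₂ : ℕ) (f : X →* Y)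
    (h1 : ∃ S : Subgroup f.ker, Group.IsSolvable S ∧ S.index ≤ J₁)
    (h2 : ∃ S : Subgroup f.range, Group.IsSolvable S ∧ S.index ≤ J₂) :
    ∃ S : Subgroup X, Group.IsSolvable S ∧ S.index ≤ J₂ * J₁.factorial.factorial := by
  obtain ⟨S1, hS1, i1⟩ := h1
  obtain ⟨S2, hS2, i2⟩ := h2
  obtain ⟨R0, hc, hs, hmax⟩ := sj_radical f.ker
  have iR : R0.index ≤ J₁.factorial := by
    have : S1.normalCore ≤ R0 := hmax _ inferInstance (sj_solv_of_le S1.normalCore_le hS1)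
    exact (Subgroup.index_antitone this).trans
      ((sj_core_index S1).trans (Nat.factorial_le i1))
  let R : Subgroup X := R0.map f.ker.subtype
  have hRn : R.Normal := inferInstance
  have hRs : Group.IsSolvable R := sj_solv_map _ _ hs
  let K' : Subgroup (X ⧸ R) := f.ker.map (QuotientGroup.mk' R)
  have hK'n : K'.Normal := Subgroup.Normal.map inferInstance _ (QuotientGroup.mk'_surjective R)
  have cK : Nat.card K' ≤ J₁.factorial := by
    have : Nat.card K' = R0.index := by
      have e := Subgroup.relIndex_ker f.ker (QuotientGroup.mk' R)
      rw [QuotientGroup.ker_mk'] at e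
      rw [show Nat.card K' = R.relIndex f.ker from e.symm, Subgroup.relIndex, Subgroup.subgroupOf]
      congr 1
      exact Subgroup.comap_map_eq_self_of_injective f.ker.subtype_injective R0
    omega
  let c : X ⧸ R →* MulAut K' := MulAut.conjNormal
  have ic : c.ker.index ≤ J₁.factorial.factorial := by
    rw [Subgroup.index_ker]
    refine le_trans ?_ (Nat.factorial_le cK)
    rw [← Nat.card_perm]
    refine Nat.card_le_card_of_injective
      (fun x : c.range => (MulAut.toPerm K' x.1)) ?_
    intro x y h
    apply Subtype.ext
    exact MulEquiv.toEquiv_injective h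
  let C : Subgroup X := c.ker.comap (QuotientGroup.mk' R)
  have iC : C.index ≤ J₁.factorial.factorial := by
    rw [Subgroup.index_comap_of_surjective _ (QuotientGroup.mk'_surjective R)]
    exact ic
  let H' : Subgroup X := S2.comap f.rangeRestrict
  have iH : H'.index ≤ J₂ := by
    rw [Subgroup.index_comap_of_surjective _ f.rangeRestrict_surjective]
    exact i2
  refine ⟨H' ⊓ C, ?_, Subgroup.index_inf_le.trans (Nat.mul_le_mul iH iC)⟩
  apply sj_solv_of_map f.rangeRestrict
  · apply sj_solv_of_map (QuotientGroup.mk' R)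
    · exact sj_solv_of_le (by simp) hRs
    · apply Group.isSolvable_of_comm
      rintro ⟨_, x, hx, rfl⟩ ⟨_, y, hy, rfl⟩
      apply Subtype.ext
      have hxc : c (QuotientGroup.mk' R x) = 1 := hx.1.2
      have hyK : QuotientGroup.mk' R y ∈ K' :=
        ⟨y, by have := hy.2; rwa [MonoidHom.ker_rangeRestrict] at this, rfl⟩
      have := congrArg Subtype.val (DFunLike.congr_fun hxc ⟨_, hyK⟩)
      simp only [c, MulAut.conjNormal_apply, MulAut.one_apply] at this
      exact mul_inv_eq_iff_eq_mul.1 this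
  · refine sj_solv_of_le ?_ hS2
    rw [Subgroup.map_le_iff_le_comap]
    exact inf_le_left

/-- Lemma 8.2: an extension of a solvably Jordan group by a solvably Jordan group is
solvably Jordan, with constant depending only on the two input constants. -/
theorem solvably_jordan_of_extension
    (J₁ J₂ : ℕ) (hJ₁ : 0 < J₁) (hJ₂ : 0 < J₂) :
    ∃ J : ℕ, ∀ (G : Type) [Group G] (N : Subgroup G) [N.Normal],
      (∀ H : Subgroup G, H ≤ N → Finite H →
        ∃ S : Subgroup H, IsSolvable S ∧ S.index ≤ J₁) →
      (∀ H : Subgroup (G ⧸ N), Finite H →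
        ∃ S : Subgroup H, IsSolvable S ∧ S.index ≤ J₂) →
      ∀ H : Subgroup G, Finite H →
        ∃ S : Subgroup H, IsSolvable S ∧ S.index ≤ J := by
  refine ⟨J₂ * J₁.factorial.factorial, ?_⟩
  intro G _ N _ h1 h2 H hH
  let f : H →* G ⧸ N := (QuotientGroup.mk' N).comp H.subtype
  refine sj_main J₁ J₂ f ?_ (h2 f.range (Finite.of_surjective _ f.rangeRestrict_surjective))
  let e := f.ker.equivMapOfInjective H.subtype H.subtype_injective
  obtain ⟨S, hS, i⟩ := h1 (f.ker.map H.subtype) (by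
    rintro _ ⟨x, hx, rfl⟩
    exact (QuotientGroup.eq_one_iff _).1 hx) (Finite.of_surjective _ e.surjective)
  refine ⟨S.map e.symm.toMonoidHom, sj_solv_map _ _ hS, ?_⟩
  exact (Subgroup.index_map_equiv S e.symm).trans_le i
end

section
/- Let G be a group and F ⊴ G a finite normal subgroup such that the quotient G/F is solvable. Then the centralizer C = C_G(F) of F in G is a solvable subgroup of G, and its index satisfies [G : C] ≤ |Aut(F)|, where Aut(F) is the (finite) automorphism group of F. -/
/-- The main step of Lemma 8.2: if `F` is a finite normal subgroup of `G` with solvable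
quotient `G ⧸ F`, then the centralizer of `F` in `G` is solvable of index at most
`|Aut(F)|`. -/
theorem centralizer_solvable_of_finite_normal_with_solvable_quotient
    (G : Type) [Group G] (F : Subgroup G) [F.Normal] [Finite F]
    (hsolv : IsSolvable (G ⧸ F)) :
    IsSolvable (Subgroup.centralizer (F : Set G)) ∧
      (Subgroup.centralizer (F : Set G)).index ≤ Nat.card (MulAut F) := by
  constructor
  · let g : Subgroup.centralizer (F : Set G) →* G ⧸ F :=
      (QuotientGroup.mk' F).comp (Subgroup.centralizer (F : Set G)).subtype
    have hker : ∀ a : g.ker, ((a : Subgroup.centralizer (F : Set G)) : G) ∈ F := by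
      intro a
      have h : QuotientGroup.mk' F ((a : Subgroup.centralizer (F : Set G)) : G) = 1 := a.2
      exact (QuotientGroup.eq_one_iff _).1 h
    have : Group.IsSolvable g.ker := Group.isSolvable_of_comm (by
      intro a b
      apply Subtype.ext
      apply Subtype.ext
      exact Subgroup.mem_centralizer_iff.1 b.1.2 _ (hker a))
    have hq : Group.IsSolvable (G ⧸ F) := hsolv
    exact Group.isSolvable_of_ker_le_range g.ker.subtype g (by simp)
  · have h : Subgroup.centralizer (F : Set G) = (MulAut.conjNormal : G →* MulAut F).ker := by
      ext x
      rw [Subgroup.mem_centralizer_iff, MonoidHom.mem_ker, MulEquiv.ext_iff]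
      constructor
      · intro hx a
        apply Subtype.ext
        rw [MulAut.conjNormal_apply, ← hx a a.2]
        simp
      · intro hx a ha
        have := congrArg Subtype.val (hx ⟨a, ha⟩)
        rw [MulAut.conjNormal_apply] at this
        exact (mul_inv_eq_iff_eq_mul.1 this).symm
    have : Finite (MulAut F) := Finite.of_injective (fun e : MulAut F => (e : F → F))
      DFunLike.coe_injective
    rw [h, Subgroup.index_ker]
    exact Subgroup.card_le_card_group _
end
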